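/- In a variable-regular Tanner graph with column weight 3, girth 8, and all cycles of length up to 12 chordless, every (a,b) elementary trapping set with b < a satisfies: a ≥ 10 if b = 0, a ≥ 9 if b = 1, a ≥ 8 if b = 2, and a ≥ 5 if b = 3. -/

import Mathlib

open SimpleGraph Finset

/-- A cycle (given as a closed walk) in a graph has a chord if either there is an
edge of the graph between two vertices of the cycle that is not an edge of the cycle,
or there is a vertex outside the cycle adjacent to two distinct vertices of the cycle. -/
def HasChord {V : Type*} (G : SimpleGraph V) {v : V} (c : G.Walk v v) : Prop :=
  (∃ x ∈ c.support, ∃ y ∈ c.support, G.Adj x y ∧ s(x, y) ∉ c.edges) ∨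
  (∃ w, w ∉ c.support ∧ ∃ x ∈ c.support, ∃ y ∈ c.support, x ≠ y ∧ G.Adj w x ∧ G.Adj w y)


structure Good {U : Type*} (H : SimpleGraph U) : Prop where
  tri : ∀ x y z, H.Adj x y → H.Adj y z → H.Adj x z → False
  chd : ∀ v1 v2 v3 v4 v5 v6, [v1, v2, v3, v4, v5, v6].Nodup → H.Adj v1 v2 → H.Adj v2 v3 →
    H.Adj v3 v4 → H.Adj v4 v5 → H.Adj v5 v6 → H.Adj v6 v1 → H.Adj v1 v4 → False

section layer2
set_option linter.unusedSectionVars false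
variable {U : Type*} [Fintype U] [DecidableEq U] {H : SimpleGraph U} [DecidableRel H.Adj]

/-- two distinct second neighbours cannot close two different 4-cycles at `v` sharing an edge -/
lemma Good.key (hH : Good H) {v x y z r s : U} (hx : H.Adj v x) (hy : H.Adj v y) (hz : H.Adj v z)
    (hxz : x ≠ z) (hxy : x ≠ y) (hyz : y ≠ z) (hr : r ≠ v) (hs : s ≠ v)
    (h1 : H.Adj x r) (h2 : H.Adj y r) (h3 : H.Adj y s) (h4 : H.Adj z s) : r = s := by
  by_contra hrs
  refine hH.chd v x r y s z ?_ hx h1 h2.symm h3 h4.symm hz.symm hy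
  have t1 := hH.tri v x z hx
  have t2 := hH.tri v x y hx
  have t3 := hH.tri v y z hy
  have t4 := hH.tri v z y hz
  have t5 := hH.tri v z x hz
  have t6 := hH.tri v y x hy
  have := hx.ne
  have := hy.ne
  have := hz.ne
  have := h1.ne
  have := h2.ne
  have := h3.ne
  have := h4.ne
  simp only [List.nodup_cons, List.mem_cons, List.not_mem_nil, or_false, not_or, not_false_eq_true,
    List.nodup_nil, and_true]
  refine ⟨⟨?_, ?_, ?_, ?_, ?_⟩, ⟨?_, ?_, ?_, ?_⟩, ⟨?_, ?_, ?_⟩, ⟨?_, ?_⟩, ?_⟩ <;> grind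

lemma Good.sum (hH : Good H) (hd : ∀ v, H.degree v ≤ 3) {v x y z : U}
    (hN : H.neighborFinset v = {x, y, z}) (hxy : x ≠ y) (hxz : x ≠ z) (hyz : y ≠ z) :
    H.degree x + H.degree y + H.degree z ≤ Fintype.card U + 1 := by
  have ax : H.Adj v x := by rw [← mem_neighborFinset, hN]; simp
  have ay : H.Adj v y := by rw [← mem_neighborFinset, hN]; simp
  have az : H.Adj v z := by rw [← mem_neighborFinset, hN]; simp
  set X := (H.neighborFinset x).erase v with hX
  set Y := (H.neighborFinset y).erase v with hY
  set Z := (H.neighborFinset z).erase v with hZ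
  have mX : ∀ r, r ∈ X ↔ r ≠ v ∧ H.Adj x r := by simp [hX]
  have mY : ∀ r, r ∈ Y ↔ r ≠ v ∧ H.Adj y r := by simp [hY]
  have mZ : ∀ r, r ∈ Z ↔ r ≠ v ∧ H.Adj z r := by simp [hZ]
  have cX : X.card + 1 = H.degree x := by
    rw [hX, card_erase_add_one (by simpa using ax.symm), card_neighborFinset_eq_degree]
  have cY : Y.card + 1 = H.degree y := by
    rw [hY, card_erase_add_one (by simpa using ay.symm), card_neighborFinset_eq_degree]
  have cZ : Z.card + 1 = H.degree z := by
    rw [hZ, card_erase_add_one (by simpa using az.symm), card_neighborFinset_eq_degree]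
  have i1 := card_union_add_card_inter X Y
  have i2 := card_union_add_card_inter (X ∪ Y) Z
  have i3 : (X ∪ Y ∪ Z).card + 4 ≤ Fintype.card U := by
    have h4 : ({v, x, y, z} : Finset U).card = 4 := by
      rw [card_insert_of_notMem, card_insert_of_notMem, card_pair hyz]
      · simp [hxy, hxz]
      · simp [ax.ne, ay.ne, az.ne]
    rw [← h4, ← card_union_of_disjoint]
    · exact card_le_univ _
    · rw [Finset.disjoint_left]
      intro r hr hr'
      have t1 := fun q => hH.tri v q r
      simp only [mem_union, mX, mY, mZ, mem_insert, mem_singleton] at hr hr'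
      rcases hr' with rfl | rfl | rfl | rfl <;> grind
  have hx3 := hd x
  have hy3 := hd y
  have hz3 := hd z
  suffices (X ∩ Y).card + ((X ∪ Y) ∩ Z).card ≤ 2 by omega
  rcases (X ∩ Y).eq_empty_or_nonempty with e | ⟨r, hr⟩
  · rw [e, card_empty]
    have := card_le_card (inter_subset_right (s₁ := X ∪ Y) (s₂ := Z))
    omega
  rcases ((X ∪ Y) ∩ Z).eq_empty_or_nonempty with e | ⟨s, hs⟩
  · rw [e, card_empty]
    have := card_le_card (inter_subset_right (s₁ := X) (s₂ := Y))
    omega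
  have key : ∀ p ∈ X ∩ Y, ∀ q ∈ (X ∪ Y) ∩ Z, p = q := by
    intro p hp q hq
    simp only [mem_inter, mem_union, mX, mY, mZ] at hp hq
    obtain ⟨⟨p0, p1⟩, -, p2⟩ := hp
    obtain ⟨q1 | q1, q0, q2⟩ := hq
    · exact hH.key ay ax az hyz hxy.symm hxz p0 q0 p2 p1 q1.2 q2
    · exact hH.key ax ay az hxz hxy hyz p0 q0 p1 p2 q1.2 q2
  have h1 : (X ∩ Y).card ≤ 1 := card_le_one.2 fun p hp q hq => (key p hp s hs).trans (key q hq s hs).symm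
  have h2 : ((X ∪ Y) ∩ Z).card ≤ 1 :=
    card_le_one.2 fun p hp q hq => (key r hr p hp).symm.trans (key r hr q hq)
  omega


lemma nbr3 (hd : ∀ v, H.degree v = 3) {v p q : U} (hp : H.Adj v p) (hq : H.Adj v q) (hpq : p ≠ q) :
    ∃ s, s ≠ p ∧ s ≠ q ∧ H.Adj v s ∧ ∀ u, H.Adj v u → u = p ∨ u = q ∨ u = s := by
  have h1 : (((H.neighborFinset v).erase p).erase q).card = 1 := by
    rw [card_erase_of_mem (by simp [hpq.symm, hq]), card_erase_of_mem (by simp [hp]),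
      card_neighborFinset_eq_degree, hd]
  obtain ⟨s, hs⟩ := card_eq_one.1 h1
  have h2 : ∀ u, u ∈ (((H.neighborFinset v).erase p).erase q) ↔ u = s := by simp [hs]
  simp only [mem_erase, mem_neighborFinset] at h2
  have h3 := (h2 s).2 rfl
  refine ⟨s, h3.2.1, h3.1, h3.2.2, fun u hu => ?_⟩
  have := h2 u
  tauto

/-- three neighbours inside a three-element list are everything -/
lemma nbrAll (hd : ∀ v, H.degree v = 3) {v p q r : U}
    (h : ∀ u, H.Adj v u → u = p ∨ u = q ∨ u = r) : H.Adj v p ∧ H.Adj v q ∧ H.Adj v r := by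
  have h1 : H.neighborFinset v ⊆ {p, q, r} := by
    intro u hu
    simpa using h u (by simpa using hu)
  have h2 : H.neighborFinset v = {p, q, r} := by
    apply eq_of_subset_of_card_le h1
    rw [card_neighborFinset_eq_degree, hd]
    exact card_le_three
  simp only [← mem_neighborFinset, h2]
  simp

lemma cover8 (hc : Fintype.card U = 8) (l : List U) (hl : l.Nodup) (h8 : l.length = 8) (u : U) :
    u ∈ l := by
  have h1 : l.toFinset = univ := by
    rw [← card_eq_iff_eq_univ, List.toFinset_card_of_nodup hl, h8, hc]
  rw [← List.mem_toFinset, h1]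
  simp

lemma Good.caseA (hH : Good H) (hd : ∀ v, H.degree v = 3) (hc : Fintype.card U = 8)
    {v x y z r : U} (hxy : x ≠ y) (hxz : x ≠ z) (hyz : y ≠ z)
    (ax : H.Adj v x) (ay : H.Adj v y) (az : H.Adj v z)
    (_hv : ∀ u, H.Adj v u → u = x ∨ u = y ∨ u = z)
    (hr : r ≠ v) (bx : H.Adj x r) (b_y : H.Adj y r) (bz : H.Adj z r) : False := by
  obtain ⟨s1, s1v, s1r, xs, hx⟩ := nbr3 hd ax.symm bx hr.symm
  obtain ⟨s2, s2v, s2r, ys, hy⟩ := nbr3 hd ay.symm b_y hr.symm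
  obtain ⟨s3, s3v, s3r, zs, hz⟩ := nbr3 hd az.symm bz hr.symm
  have e12 : s1 ≠ s2 := by
    rintro rfl
    exact s1r (hH.key ax ay az hxz hxy hyz s1v hr xs ys b_y bz)
  have e13 : s1 ≠ s3 := by
    rintro rfl
    exact s1r (hH.key ax az ay hxy hxz hyz.symm s1v hr xs zs bz b_y)
  have e23 : s2 ≠ s3 := by
    rintro rfl
    exact s2r (hH.key ay az ax hxy.symm hyz hxz.symm s2v hr ys zs bz bx)
  have sym : ∀ a b, H.Adj a b → H.Adj b a := fun a b h => h.symm
  have irr : ∀ a, ¬ H.Adj a a := fun a h => h.ne rfl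
  have t : ∀ a b, H.Adj v a → H.Adj v b → ¬ H.Adj a b := fun a b h1 h2 h3 => hH.tri v a b h1 h3 h2
  have cov := cover8 hc [v, x, y, z, r, s1, s2, s3] (by
    simp only [List.nodup_cons, List.mem_cons, List.not_mem_nil, or_false, not_or,
      not_false_eq_true, List.nodup_nil, and_true]
    refine ⟨⟨?_, ?_, ?_, ?_, ?_, ?_, ?_⟩, ⟨?_, ?_, ?_, ?_, ?_, ?_⟩, ⟨?_, ?_, ?_, ?_, ?_⟩,
      ⟨?_, ?_, ?_, ?_⟩, ⟨?_, ?_, ?_⟩, ⟨?_, ?_⟩, ?_⟩ <;> grind) rfl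
  simp only [List.mem_cons, List.not_mem_nil, or_false] at cov
  have hrn : ∀ u, H.Adj r u → u = x ∨ u = y ∨ u = z := by
    obtain ⟨q, q1, q2, q3, hq⟩ := nbr3 hd bx.symm b_y.symm hxy
    intro u hu
    have := hq z bz.symm
    have := hq u hu
    grind
  have f1 : H.Adj s1 x ∧ H.Adj s1 s2 ∧ H.Adj s1 s3 := nbrAll hd fun u hu => by
    have := cov u
    grind
  have f2 : H.Adj s2 y ∧ H.Adj s2 s1 ∧ H.Adj s2 s3 := nbrAll hd fun u hu => by
    have := cov u
    grind
  exact hH.tri s1 s2 s3 f1.2.1 f2.2.2 f1.2.2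

lemma Good.caseB (hH : Good H) (hd : ∀ v, H.degree v = 3) (hc : Fintype.card U = 8)
    {v x y z r q : U} (hxy : x ≠ y) (hxz : x ≠ z) (hyz : y ≠ z)
    (ax : H.Adj v x) (ay : H.Adj v y) (az : H.Adj v z)
    (_hv : ∀ u, H.Adj v u → u = x ∨ u = y ∨ u = z)
    (hr : r ≠ v) (hq : q ≠ v) (hrq : r ≠ q) (bx : H.Adj x r) (b_y : H.Adj y r)
    (cx : H.Adj x q) (cy : H.Adj y q) : False := by
  have hx : ∀ u, H.Adj x u → u = v ∨ u = r ∨ u = q := by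
    obtain ⟨w, q1, q2, q3, hw⟩ := nbr3 hd ax.symm bx hr.symm
    intro u hu
    have := hw q cx
    have := hw u hu
    grind
  have hy : ∀ u, H.Adj y u → u = v ∨ u = r ∨ u = q := by
    obtain ⟨w, q1, q2, q3, hw⟩ := nbr3 hd ay.symm b_y hr.symm
    intro u hu
    have := hw q cy
    have := hw u hu
    grind
  have nzr : ¬ H.Adj z r := fun h => hrq (hH.key ax ay az hxz hxy hyz hq hr cx cy b_y h).symm
  have nzq : ¬ H.Adj z q := fun h => hrq (hH.key ax ay az hxz hxy hyz hr hq bx b_y cy h)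
  obtain ⟨s, zs, sv⟩ : ∃ s, H.Adj z s ∧ s ≠ v := by
    have h1 : ((H.neighborFinset z).erase v).card ≠ 0 := by
      rw [card_erase_of_mem (by simp [az.symm]), card_neighborFinset_eq_degree, hd]
      simp
    obtain ⟨s, hs⟩ := card_pos.1 (Nat.pos_of_ne_zero h1)
    simp only [mem_erase, mem_neighborFinset] at hs
    exact ⟨s, hs.2, hs.1⟩
  obtain ⟨t, tv, ts, zt, hz⟩ := nbr3 hd az.symm zs sv.symm
  have sym : ∀ a b, H.Adj a b → H.Adj b a := fun a b h => h.symm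
  have irr : ∀ a, ¬ H.Adj a a := fun a h => h.ne rfl
  have tt : ∀ a b, H.Adj v a → H.Adj v b → ¬ H.Adj a b := fun a b h1 h2 h3 => hH.tri v a b h1 h3 h2
  have cov := cover8 hc [v, x, y, z, r, q, s, t] (by
    simp only [List.nodup_cons, List.mem_cons, List.not_mem_nil, or_false, not_or,
      not_false_eq_true, List.nodup_nil, and_true]
    refine ⟨⟨?_, ?_, ?_, ?_, ?_, ?_, ?_⟩, ⟨?_, ?_, ?_, ?_, ?_, ?_⟩, ⟨?_, ?_, ?_, ?_, ?_⟩,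
      ⟨?_, ?_, ?_, ?_⟩, ⟨?_, ?_, ?_⟩, ⟨?_, ?_⟩, ?_⟩ <;> grind) rfl
  simp only [List.mem_cons, List.not_mem_nil, or_false] at cov
  have nst : ¬ H.Adj s t := fun h => hH.tri z s t zs h zt
  have f1 : H.Adj s z ∧ H.Adj s r ∧ H.Adj s q := nbrAll hd fun u hu => by
    have := cov u
    grind
  have f2 : H.Adj t z ∧ H.Adj t r ∧ H.Adj t q := nbrAll hd fun u hu => by
    have := cov u
    grind
  obtain ⟨w, q1, q2, q3, hw⟩ := nbr3 hd bx.symm b_y.symm hxy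
  have := hw s f1.2.1.symm
  have := hw t f2.2.1.symm
  grind

lemma Good.cubic8 (hH : Good H) (hd : ∀ v, H.degree v = 3) (hc : Fintype.card U = 8) : False := by
  have : Nonempty U := Fintype.card_pos_iff.1 (by omega)
  obtain ⟨v⟩ := this
  obtain ⟨x, y, z, hxy, hxz, hyz, hN⟩ := card_eq_three.1
    ((card_neighborFinset_eq_degree H v).trans (hd v))
  have hv : ∀ u, H.Adj v u ↔ u = x ∨ u = y ∨ u = z := by
    intro u
    rw [← mem_neighborFinset, hN]; simp
  have ax : H.Adj v x := by rw [hv]; simp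
  have ay : H.Adj v y := by rw [hv]; simp
  have az : H.Adj v z := by rw [hv]; simp
  set X := (H.neighborFinset x).erase v with hX
  set Y := (H.neighborFinset y).erase v with hY
  set Z := (H.neighborFinset z).erase v with hZ
  have mX : ∀ r, r ∈ X ↔ r ≠ v ∧ H.Adj x r := by simp [hX]
  have mY : ∀ r, r ∈ Y ↔ r ≠ v ∧ H.Adj y r := by simp [hY]
  have mZ : ∀ r, r ∈ Z ↔ r ≠ v ∧ H.Adj z r := by simp [hZ]
  have cX : X.card = 2 := by
    rw [hX, card_erase_of_mem (by simp [ax.symm]), card_neighborFinset_eq_degree, hd]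
  have cY : Y.card = 2 := by
    rw [hY, card_erase_of_mem (by simp [ay.symm]), card_neighborFinset_eq_degree, hd]
  have cZ : Z.card = 2 := by
    rw [hZ, card_erase_of_mem (by simp [az.symm]), card_neighborFinset_eq_degree, hd]
  have i1 := card_union_add_card_inter X Y
  have i2 := card_union_add_card_inter (X ∪ Y) Z
  have i3 : (X ∪ Y ∪ Z).card + 4 ≤ Fintype.card U := by
    have h4 : ({v, x, y, z} : Finset U).card = 4 := by
      rw [card_insert_of_notMem, card_insert_of_notMem, card_pair hyz]
      · simp [hxy, hxz]
      · simp [ax.ne, ay.ne, az.ne]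
    rw [← h4, ← card_union_of_disjoint]
    · exact card_le_univ _
    · rw [Finset.disjoint_left]
      intro r hr hr'
      have t1 := fun q => hH.tri v q r
      simp only [mem_union, mX, mY, mZ, mem_insert, mem_singleton] at hr hr'
      rcases hr' with rfl | rfl | rfl | rfl <;> grind
  rcases (X ∩ Y).eq_empty_or_nonempty with e | ⟨r, hr⟩
  · rw [e, card_empty] at i1
    have h1 : (X ∪ Y) ∩ Z = Z := eq_of_subset_of_card_le inter_subset_right (by omega)
    obtain ⟨p, q, hpq, hZpq⟩ := card_eq_two.1 cZ
    have hp : p ∈ (X ∪ Y) ∩ Z := by rw [h1, hZpq]; simp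
    have hq : q ∈ (X ∪ Y) ∩ Z := by rw [h1, hZpq]; simp
    simp only [mem_inter, mem_union, mX, mY, mZ] at hp hq
    obtain ⟨hp1 | hp1, hpv, hp2⟩ := hp <;> obtain ⟨hq1 | hq1, hqv, hq2⟩ := hq
    · exact hH.caseB hd hc hxz hxy hyz.symm ax az ay (fun u hu => by have := (hv u).1 hu; tauto)
        hpv hqv hpq hp1.2 hp2 hq1.2 hq2
    · exact hpq (hH.key ax az ay hxy hxz hyz.symm hpv hqv hp1.2 hp2 hq2 hq1.2)
    · exact hpq (hH.key ay az ax hxy.symm hyz hxz.symm hpv hqv hp1.2 hp2 hq2 hq1.2)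
    · exact hH.caseB hd hc hyz hxy.symm hxz.symm ay az ax
        (fun u hu => by have := (hv u).1 hu; tauto)
        hpv hqv hpq hp1.2 hp2 hq1.2 hq2
  rcases ((X ∪ Y) ∩ Z).eq_empty_or_nonempty with e | ⟨s, hs⟩
  · rw [e, card_empty] at i2
    have h2 : 1 < (X ∩ Y).card := by omega
    obtain ⟨p, hp, q, hq, hpq⟩ := one_lt_card.1 h2
    simp only [mem_inter, mX, mY] at hp hq
    exact hH.caseB hd hc hxy hxz hyz ax ay az (fun u => (hv u).1) hp.1.1 hq.1.1 hpq
      hp.1.2 hp.2.2 hq.1.2 hq.2.2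
  simp only [mem_inter, mem_union, mX, mY, mZ] at hr hs
  obtain ⟨⟨p0, p1⟩, -, p2⟩ := hr
  have hrs : r = s := by
    obtain ⟨q1 | q1, q0, q2⟩ := hs
    · exact hH.key ay ax az hyz hxy.symm hxz p0 q0 p2 p1 q1.2 q2
    · exact hH.key ax ay az hxz hxy hyz p0 q0 p1 p2 q1.2 q2
  subst hrs
  exact hH.caseA hd hc hxy hxz hyz ax ay az (fun u => (hv u).1) p0 p1 p2 hs.2.2

/-- deficiency bound -/
lemma Good.main (hH : Good H) (d : U → ℕ) (hd : ∀ v, H.degree v + d v = 3) (b : ℕ)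
    (hb : ∑ v, d v = b) (hba : b < Fintype.card U) :
    (b = 0 → 10 ≤ Fintype.card U) ∧ (b = 1 → 9 ≤ Fintype.card U) ∧
    (b = 2 → 8 ≤ Fintype.card U) ∧ (b = 3 → 5 ≤ Fintype.card U) := by
  have hd3 : ∀ v, H.degree v ≤ 3 := fun v => by have := hd v; omega
  have par : b + 2 * H.edgeFinset.card = 3 * Fintype.card U := by
    rw [← hb, ← sum_degrees_eq_twice_card_edges, ← sum_add_distrib, mul_comm, ← smul_eq_mul,
      ← Finset.card_univ, ← sum_const]
    exact sum_congr rfl fun v _ => by have := hd v; omega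
  -- at a vertex of full degree
  have full : ∀ v, d v = 0 → 8 ≤ Fintype.card U + ∑ u ∈ H.neighborFinset v, d u := by
    intro v hv
    obtain ⟨x, y, z, hxy, hxz, hyz, hN⟩ := card_eq_three.1
      ((card_neighborFinset_eq_degree H v).trans (by have := hd v; omega : H.degree v = 3))
    have h1 := hH.sum hd3 hN hxy hxz hyz
    have hx := hd x
    have hy := hd y
    have hz := hd z
    rw [hN, sum_insert (by simp [hxy, hxz]), sum_pair hyz]
    omega
  have sumle : ∀ s : Finset U, ∑ u ∈ s, d u ≤ b := fun s => by
    rw [← hb]; exact sum_le_sum_of_subset (subset_univ s)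
  have ex0 : ∃ v, d v = 0 := by
    by_contra! h
    have : ∑ v : U, 1 ≤ ∑ v, d v := sum_le_sum fun v _ => Nat.one_le_iff_ne_zero.2 (h v)
    simp at this
    omega
  obtain ⟨v0, hv0⟩ := ex0
  have base := (full v0 hv0).trans (Nat.add_le_add_left (sumle _) _)
  refine ⟨?_, ?_, ?_, ?_⟩
  · intro h
    have h8 : Fintype.card U ≠ 8 := fun hc => by
      refine hH.cubic8 (fun v => ?_) hc
      have h1 := hd v
      have h2 := sumle {v}
      simp only [sum_singleton] at h2
      omega
    omega
  · intro h
    by_contra hlt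
    have hc : Fintype.card U = 7 := by omega
    obtain ⟨w, hw⟩ : ∃ w, d w ≠ 0 := by
      by_contra! hh
      simp [hh] at hb
      omega
    have hz : ∀ u, u ≠ w → d u = 0 := by
      intro u hu
      have := sumle {u, w}
      rw [sum_pair hu] at this
      omega
    obtain ⟨v, hv⟩ : ∃ v, v ∉ insert w (H.neighborFinset w) := by
      by_contra! hh
      have h1 : insert w (H.neighborFinset w) = univ := eq_univ_iff_forall.2 hh
      have h2 := card_insert_le w (H.neighborFinset w)
      rw [h1, Finset.card_univ, card_neighborFinset_eq_degree] at h2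
      have := hd3 w
      omega
    simp only [mem_insert, mem_neighborFinset, not_or] at hv
    have h1 := full v (hz v hv.1)
    rw [sum_eq_zero] at h1
    · omega
    · intro u hu
      apply hz
      rintro rfl
      rw [mem_neighborFinset] at hu
      exact hv.2 hu.symm
  · intro h
    by_contra hlt
    have hc : Fintype.card U = 6 := by omega
    obtain ⟨w, hw⟩ : ∃ w, d w ≠ 0 := by
      by_contra! hh
      simp [hh] at hb
      omega
    -- all full vertices are adjacent to `w`
    have hadj : ∀ v, d v = 0 → H.Adj v w := by
      intro v hv
      by_contra hn
      have h1 := full v hv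
      have h2 := sumle (insert w (H.neighborFinset v))
      rw [sum_insert (by simpa using hn)] at h2
      omega
    have h1 : univ.filter (fun v => d v = 0) ⊆ H.neighborFinset w := by
      intro v hv
      simp only [mem_filter, mem_univ, true_and] at hv
      simpa using (hadj v hv).symm
    have h2 := card_le_card h1
    have h3 := card_filter_add_card_filter_not (s := (univ : Finset U)) (fun v => d v = 0)
    have h4 : (univ.filter (fun v => ¬ d v = 0)).card ≤ b := by
      refine le_trans ?_ (sumle (univ.filter (fun v => ¬ d v = 0)))
      rw [card_eq_sum_ones]
      exact sum_le_sum fun v hv => Nat.one_le_iff_ne_zero.2 (by simpa using hv)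
    rw [card_neighborFinset_eq_degree] at h2
    rw [Finset.card_univ] at h3
    have := hd w
    omega
  · intro h
    omega

end layer2

/-- no cycle of length 4 -/
lemma no4 {V : Type*} {G : SimpleGraph V} (hg : (8 : ℕ∞) ≤ G.girth) {u v w x : V} (huv : u ≠ v)
    (hwx : w ≠ x) (h1 : G.Adj u w) (h2 : G.Adj w v) (h3 : G.Adj v x) (h4 : G.Adj x u) : False := by
  let c : G.Walk u u := .cons h1 (.cons h2 (.cons h3 (.cons h4 .nil)))
  have hc : c.IsCycle := by
    have := h1.ne
    have := h2.ne
    have := h3.ne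
    have := h4.ne
    rw [Walk.cons_isCycle_iff, Walk.isPath_def]
    simp
    grind
  have h := hc.girth_le_length
  have h8 : 8 ≤ G.girth := by exact_mod_cast hg
  simp [c] at h
  omega

lemma no6 {V : Type*} {G : SimpleGraph V} (hg : (8 : ℕ∞) ≤ G.girth) {x1 x2 x3 x4 x5 x6 : V}
    (hn : [x1, x2, x3, x4, x5, x6].Nodup) (h1 : G.Adj x1 x2) (h2 : G.Adj x2 x3) (h3 : G.Adj x3 x4)
    (h4 : G.Adj x4 x5) (h5 : G.Adj x5 x6) (h6 : G.Adj x6 x1) : False := by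
  let c : G.Walk x1 x1 := .cons h1 (.cons h2 (.cons h3 (.cons h4 (.cons h5 (.cons h6 .nil)))))
  have hc : c.IsCycle := by
    simp at hn
    rw [Walk.cons_isCycle_iff, Walk.isPath_def]
    simp
    grind
  have h := hc.girth_le_length
  have h8 : 8 ≤ G.girth := by exact_mod_cast hg
  simp [c] at h
  omega

/-- no cycle of length 12 with an outside vertex adjacent to two of its vertices -/
lemma no12 {V : Type*} {G : SimpleGraph V}
    (hchord : ∀ (v : V) (c : G.Walk v v), c.IsCycle → c.length ≤ 12 → ¬ HasChord G c)
    {v1 v2 v3 v4 v5 v6 c1 c2 c3 c4 c5 c6 w : V}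
    (hn : [v1, v2, v3, v4, v5, v6].Nodup)
    (hm : [c1, c2, c3, c4, c5, c6, w].Nodup)
    (hvc : ∀ x ∈ [v1, v2, v3, v4, v5, v6], ∀ y ∈ [c1, c2, c3, c4, c5, c6, w], x ≠ y)
    (l1 : G.Adj c1 v1) (r1 : G.Adj c1 v2) (l2 : G.Adj c2 v2) (r2 : G.Adj c2 v3)
    (l3 : G.Adj c3 v3) (r3 : G.Adj c3 v4) (l4 : G.Adj c4 v4) (r4 : G.Adj c4 v5)
    (l5 : G.Adj c5 v5) (r5 : G.Adj c5 v6) (l6 : G.Adj c6 v6) (r6 : G.Adj c6 v1)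
    (w1 : G.Adj w v1) (w4 : G.Adj w v4) : False := by
  let c : G.Walk v1 v1 := .cons l1.symm (.cons r1 (.cons l2.symm (.cons r2 (.cons l3.symm
    (.cons r3 (.cons l4.symm (.cons r4 (.cons l5.symm (.cons r5 (.cons l6.symm
    (.cons r6 .nil)))))))))))
  simp only [List.nodup_cons, List.mem_cons, List.not_mem_nil, or_false, not_or,
      not_false_eq_true, List.nodup_nil, and_true] at hn hm
  simp only [List.forall_mem_cons, List.not_mem_nil, false_imp_iff, implies_true, and_true] at hvc
  have hc : c.IsCycle := by
    rw [Walk.cons_isCycle_iff, Walk.isPath_def]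
    simp only [Walk.support_cons, Walk.support_nil, Walk.edges_cons, Walk.edges_nil,
      List.nodup_cons, List.mem_cons, List.not_mem_nil, or_false, not_or,
      not_false_eq_true, List.nodup_nil, and_true, Sym2.eq_iff, not_and_or]
    and_intros <;> grind
  refine hchord v1 c hc (by simp [c]) (Or.inr ⟨w, ?_, v1, ?_, v4, ?_, ?_, w1, w4⟩)
  · simp only [c, Walk.support_cons, Walk.support_nil, List.mem_cons, List.not_mem_nil, or_false,
      not_or]
    and_intros <;> grind
  · simp [c]
  · simp [c]
  · grind

/-- In a variable-regular Tanner graph with column weight 3, girth (at least) 8, and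
all cycles of length up to 12 chordless, every `(a,b)` elementary trapping set with
`b < a` satisfies: `a ≥ 10` if `b = 0`, `a ≥ 9` if `b = 1`, `a ≥ 8` if `b = 2`, and
`a ≥ 5` if `b = 3`. -/
theorem stmt_14 {V : Type*} [Fintype V] [DecidableEq V]
    (G : SimpleGraph V) [DecidableRel G.Adj]
    (isVar : V → Prop) [DecidablePred isVar]
    (hbip : ∀ x y, G.Adj x y → (isVar x ↔ ¬ isVar y))
    (hdegV : ∀ v, isVar v → G.degree v = 3)
    (hg : (8 : ℕ∞) ≤ G.girth)
    (hchord : ∀ (v : V) (c : G.Walk v v), c.IsCycle → c.length ≤ 12 → ¬ HasChord G c)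
    (S : Finset V) (hSvar : ∀ v ∈ S, isVar v)
    (hets : ∀ w, ¬ isVar w → (S.filter (fun v => G.Adj w v)).card ≤ 2)
    (a b : ℕ) (ha : a = S.card)
    (hb : b = (univ.filter (fun w =>
      ¬ isVar w ∧ (S.filter (fun v => G.Adj w v)).card = 1)).card)
    (hba : b < a) :
    (b = 0 → 10 ≤ a) ∧ (b = 1 → 9 ≤ a) ∧ (b = 2 → 8 ≤ a) ∧ (b = 3 → 5 ≤ a) := by
  classical
  -- the variable node graph
  let H : SimpleGraph S :=
    { Adj := fun u v => u ≠ v ∧ ∃ w, G.Adj w u ∧ G.Adj w v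
      symm := ⟨fun u v h => ⟨h.1.symm, h.2.imp fun w hw => hw.symm⟩⟩
      loopless := ⟨fun u h => h.1 rfl⟩ }
  have hHadj : ∀ u v : S, H.Adj u v ↔ u ≠ v ∧ ∃ w, G.Adj w u ∧ G.Adj w v := fun u v => Iff.rfl
  have nv : ∀ w, ∀ v ∈ S, G.Adj w v → ¬ isVar w := fun w v hv h h' =>
    (hbip w v h).1 h' (hSvar v hv)
  have cd : ∀ w w' u1 u2 u3, u1 ∈ S → u2 ∈ S → u3 ∈ S → u1 ≠ u2 → u1 ≠ u3 → u2 ≠ u3 →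
      G.Adj w u1 → G.Adj w u2 → G.Adj w' u3 → w ≠ w' := by
    rintro w w' u1 u2 u3 h1 h2 h3 h12 h13 h23 a1 a2 a3 rfl
    have hle := hets w (nv w u1 h1 a1)
    have h3c : ({u1, u2, u3} : Finset V).card = 3 := card_eq_three.2 ⟨_, _, _, h12, h13, h23, rfl⟩
    have hsub : ({u1, u2, u3} : Finset V) ⊆ S.filter (fun v => G.Adj w v) := by
      intro x hx
      simp only [mem_insert, mem_singleton] at hx
      rcases hx with rfl | rfl | rfl <;> simp [*]
    have := card_le_card hsub
    omega
  have good : Good H := by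
    constructor
    · rintro ⟨x, hx⟩ ⟨y, hy⟩ ⟨z, hz⟩ hxy hyz hxz
      rw [hHadj] at hxy hyz hxz
      obtain ⟨nxy, c1, l1, r1⟩ := hxy
      obtain ⟨nyz, c2, l2, r2⟩ := hyz
      obtain ⟨nxz, c3, l3, r3⟩ := hxz
      simp only [ne_eq, Subtype.mk.injEq] at nxy nyz nxz l1 r1 l2 r2 l3 r3
      have n12 : c1 ≠ c2 := cd _ _ x y z hx hy hz nxy nxz nyz l1 r1 r2
      have n13 : c1 ≠ c3 := cd _ _ x y z hx hy hz nxy nxz nyz l1 r1 r3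
      have n23 : c2 ≠ c3 := cd _ _ y z x hy hz hx nyz (Ne.symm nxy) (Ne.symm nxz) l2 r2 l3
      have k1 := nv _ _ hx l1
      have k2 := nv _ _ hy l2
      have k3 := nv _ _ hz r3
      have j1 := hSvar x hx
      have j2 := hSvar y hy
      have j3 := hSvar z hz
      refine no6 hg (x1 := x) (x2 := c1) (x3 := y) (x4 := c2) (x5 := z) (x6 := c3) ?_
        l1.symm r1 l2.symm r2 r3.symm l3
      simp only [List.nodup_cons, List.mem_cons, List.not_mem_nil, or_false, not_or,
        not_false_eq_true, List.nodup_nil, and_true]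
      and_intros <;> grind
    · rintro ⟨v1, m1⟩ ⟨v2, m2⟩ ⟨v3, m3⟩ ⟨v4, m4⟩ ⟨v5, m5⟩ ⟨v6, m6⟩ hn h1 h2 h3 h4 h5 h6 h7
      obtain ⟨-, c1, l1, r1⟩ := h1
      obtain ⟨-, c2, l2, r2⟩ := h2
      obtain ⟨-, c3, l3, r3⟩ := h3
      obtain ⟨-, c4, l4, r4⟩ := h4
      obtain ⟨-, c5, l5, r5⟩ := h5
      obtain ⟨-, c6, l6, r6⟩ := h6
      obtain ⟨-, c7, l7, r7⟩ := h7
      simp only at l1 r1 l2 r2 l3 r3 l4 r4 l5 r5 l6 r6 l7 r7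
      have hn' : [v1, v2, v3, v4, v5, v6].Nodup := by simpa using hn
      have hn2 := hn'
      simp only [List.nodup_cons, List.mem_cons, List.not_mem_nil, or_false, not_or,
        not_false_eq_true, List.nodup_nil, and_true] at hn2
      have n12 : c1 ≠ c2 := cd _ _ v1 v2 v3 m1 m2 m3 (by grind) (by grind) (by grind) l1 r1 r2
      have n13 : c1 ≠ c3 := cd _ _ v1 v2 v3 m1 m2 m3 (by grind) (by grind) (by grind) l1 r1 l3
      have n14 : c1 ≠ c4 := cd _ _ v1 v2 v4 m1 m2 m4 (by grind) (by grind) (by grind) l1 r1 l4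
      have n15 : c1 ≠ c5 := cd _ _ v1 v2 v5 m1 m2 m5 (by grind) (by grind) (by grind) l1 r1 l5
      have n16 : c1 ≠ c6 := cd _ _ v1 v2 v6 m1 m2 m6 (by grind) (by grind) (by grind) l1 r1 l6
      have n17 : c1 ≠ c7 := cd _ _ v1 v2 v4 m1 m2 m4 (by grind) (by grind) (by grind) l1 r1 r7
      have n23 : c2 ≠ c3 := cd _ _ v2 v3 v4 m2 m3 m4 (by grind) (by grind) (by grind) l2 r2 r3
      have n24 : c2 ≠ c4 := cd _ _ v2 v3 v4 m2 m3 m4 (by grind) (by grind) (by grind) l2 r2 l4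
      have n25 : c2 ≠ c5 := cd _ _ v2 v3 v5 m2 m3 m5 (by grind) (by grind) (by grind) l2 r2 l5
      have n26 : c2 ≠ c6 := cd _ _ v2 v3 v6 m2 m3 m6 (by grind) (by grind) (by grind) l2 r2 l6
      have n27 : c2 ≠ c7 := cd _ _ v2 v3 v1 m2 m3 m1 (by grind) (by grind) (by grind) l2 r2 l7
      have n34 : c3 ≠ c4 := cd _ _ v3 v4 v5 m3 m4 m5 (by grind) (by grind) (by grind) l3 r3 r4
      have n35 : c3 ≠ c5 := cd _ _ v3 v4 v5 m3 m4 m5 (by grind) (by grind) (by grind) l3 r3 l5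
      have n36 : c3 ≠ c6 := cd _ _ v3 v4 v6 m3 m4 m6 (by grind) (by grind) (by grind) l3 r3 l6
      have n37 : c3 ≠ c7 := cd _ _ v3 v4 v1 m3 m4 m1 (by grind) (by grind) (by grind) l3 r3 l7
      have n45 : c4 ≠ c5 := cd _ _ v4 v5 v6 m4 m5 m6 (by grind) (by grind) (by grind) l4 r4 r5
      have n46 : c4 ≠ c6 := cd _ _ v4 v5 v6 m4 m5 m6 (by grind) (by grind) (by grind) l4 r4 l6
      have n47 : c4 ≠ c7 := cd _ _ v4 v5 v1 m4 m5 m1 (by grind) (by grind) (by grind) l4 r4 l7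
      have n56 : c5 ≠ c6 := cd _ _ v5 v6 v1 m5 m6 m1 (by grind) (by grind) (by grind) l5 r5 r6
      have n57 : c5 ≠ c7 := cd _ _ v5 v6 v1 m5 m6 m1 (by grind) (by grind) (by grind) l5 r5 l7
      have n67 : c6 ≠ c7 := cd _ _ v6 v1 v4 m6 m1 m4 (by grind) (by grind) (by grind) l6 r6 r7

      refine no12 hchord hn' (c1 := c1) (c2 := c2) (c3 := c3) (c4 := c4) (c5 := c5) (c6 := c6)
        (w := c7) ?_ ?_ l1 r1 l2 r2 l3 r3 l4 r4 l5 r5 l6 r6 l7 r7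
      · simp only [List.nodup_cons, List.mem_cons, List.not_mem_nil, or_false, not_or,
          not_false_eq_true, List.nodup_nil, and_true]
        and_intros <;> assumption
      · intro x hx y hy hxy
        have e1 : isVar x := by
          simp only [List.mem_cons, List.not_mem_nil, or_false] at hx
          rcases hx with rfl | rfl | rfl | rfl | rfl | rfl <;> exact hSvar _ (by assumption)
        have e2 : ¬ isVar y := by
          simp only [List.mem_cons, List.not_mem_nil, or_false] at hy
          rcases hy with rfl | rfl | rfl | rfl | rfl | rfl | rfl
          · exact nv _ _ m1 l1
          · exact nv _ _ m2 l2
          · exact nv _ _ m3 l3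
          · exact nv _ _ m4 l4
          · exact nv _ _ m5 l5
          · exact nv _ _ m6 l6
          · exact nv _ _ m1 l7
        exact e2 (hxy ▸ e1)
  set F := univ.filter (fun w => ¬ isVar w ∧ (S.filter (fun v => G.Adj w v)).card = 1) with hF
  have hdeg : ∀ v : S, H.degree v + (F.filter (fun w => G.Adj w v)).card = 3 := by
    rintro ⟨v, hv⟩
    have e1 : (H.neighborFinset ⟨v, hv⟩).map (Function.Embedding.subtype _) =
        (G.neighborFinset v).biUnion (fun w => (S.filter (fun u => G.Adj w u)).erase v) := by
      ext u
      simp only [mem_map, mem_neighborFinset, hHadj, Function.Embedding.coe_subtype, mem_biUnion,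
        mem_erase, mem_filter]
      constructor
      · rintro ⟨⟨u', hu'⟩, ⟨hne, w, hw1, hw2⟩, rfl⟩
        exact ⟨w, hw1.symm, fun h => hne (Subtype.ext h.symm), hu', hw2⟩
      · rintro ⟨w, hw, hne, hu, hwu⟩
        exact ⟨⟨u, hu⟩, ⟨fun h => hne (congrArg Subtype.val h).symm, w, hw.symm, hwu⟩, rfl⟩
    have e2 : H.degree ⟨v, hv⟩ =
        ∑ w ∈ G.neighborFinset v, ((S.filter (fun u => G.Adj w u)).erase v).card := by
      rw [← card_neighborFinset_eq_degree, ← card_map (Function.Embedding.subtype _), e1,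
        card_biUnion]
      intro w hw w' hw' hne
      rw [Function.onFun, Finset.disjoint_left]
      intro u hu hu'
      simp only [mem_erase, mem_filter, mem_coe, mem_neighborFinset] at hu hu' hw hw'
      exact no4 hg (Ne.symm hu.1) hne hw hu.2.2 hu'.2.2.symm hw'.symm
    have e3 : F.filter (fun w => G.Adj w v) =
        (G.neighborFinset v).filter (fun w => (S.filter (fun u => G.Adj w u)).card = 1) := by
      ext w
      simp only [hF, mem_filter, mem_univ, true_and, mem_neighborFinset]
      constructor
      · rintro ⟨⟨-, h1⟩, h2⟩
        exact ⟨h2.symm, h1⟩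
      · rintro ⟨h1, h2⟩
        exact ⟨⟨nv w v hv h1.symm, h2⟩, h1.symm⟩
    rw [e2, e3, card_filter, ← sum_add_distrib]
    have e4 : ∀ w ∈ G.neighborFinset v, ((S.filter (fun u => G.Adj w u)).erase v).card +
        (if (S.filter (fun u => G.Adj w u)).card = 1 then 1 else 0) = 1 := by
      intro w hw
      rw [mem_neighborFinset] at hw
      have hmem : v ∈ S.filter (fun u => G.Adj w u) := by simp [hv, hw.symm]
      have h1 := hets w (nv w v hv hw.symm)
      have h2 := card_erase_add_one hmem
      split_ifs <;> omega
    rw [sum_congr rfl e4, ← card_eq_sum_ones, card_neighborFinset_eq_degree,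
      hdegV v (hSvar v hv)]
  have hsum : ∑ v : S, (F.filter (fun w => G.Adj w v)).card = b := by
    rw [sum_coe_sort S (fun v => (F.filter (fun w => G.Adj w v)).card), hb]
    have := sum_card_bipartiteAbove_eq_sum_card_bipartiteBelow (s := F) (t := S)
      (fun w v => G.Adj w v)
    simp only [bipartiteAbove, bipartiteBelow] at this
    rw [← this, card_eq_sum_ones]
    refine sum_congr rfl fun w hw => ?_
    simp only [hF, mem_filter] at hw
    exact hw.2.2
  have hcard : Fintype.card S = a := by rw [ha, Fintype.card_coe]
  have := good.main (fun v : S => (F.filter (fun w => G.Adj w v)).card) hdeg b hsum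
    (by rw [hcard]; exact hba)
  rwa [hcard] at this
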